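/- Let (L, u, d) and (M, u', d') be conic frames (frames equipped with join-preserving parallel pairs of cones) and let h : L → M be a frame homomorphism. Then h satisfies u' ∘ h ≤ h ∘ u and d' ∘ h ≤ h ∘ d (i.e. h is a conic morphism) if and only if for all a, b, c, e ∈ L: if u(a) ⊓ b = u(c) ⊓ e and a ⊓ d(b) = c ⊓ d(e), then u'(h a) ⊓ h b = u'(h c) ⊓ h e and h a ⊓ d'(h b) = h c ⊓ d'(h e). -/

import Mathlib

/-- A pair of functions on a meet-semilattice is *parallel* if
`u x ⊓ y ≤ u (x ⊓ d y)` and `x ⊓ d y ≤ d (u x ⊓ y)` for all `x, y`. -/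
def IsParallel {L : Type*} [SemilatticeInf L] (u d : L → L) : Prop :=
  ∀ x y : L, u x ⊓ y ≤ u (x ⊓ d y) ∧ x ⊓ d y ≤ d (u x ⊓ y)

/-- A function on a frame preserves arbitrary joins. -/
def PreservesJoins {L : Type*} [Order.Frame L] (f : L → L) : Prop :=
  ∀ A : Set L, f (sSup A) = sSup (f '' A)

/-!
The relation `(a, b) ∼ (c, e)`, meaning `u a ⊓ b = u c ⊓ e` and `a ⊓ d b = c ⊓ d e`, is symmetric
under exchanging `u` with `d` and swapping the pairs, so only the claims about `u` need an argument.

If `h` is a conic morphism and `(a, b) ∼ (c, e)`, then `h a ⊓ d' (h b) ≤ h (a ⊓ d b) ≤ h c`, and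
parallelism in the codomain turns this into `u' (h a) ⊓ h b ≤ u' (h c)`. Conversely, parallelism in
the domain gives `(x, ⊤) ∼ (x, u x)`; if `h` preserves `∼`, this yields
`u' (h x) = u' (h x) ⊓ h (u x)`.
-/

theorem PreservesJoins.monotone {L : Type*} [Order.Frame L] {f : L → L}
    (hf : PreservesJoins f) : Monotone f :=
  OrderHomClass.mono (⟨f, hf⟩ : sSupHom L L)

/-- The relation `∼` on pairs induced by two functions `u` and `d`: both the meet `u a ⊓ b` and
the meet `a ⊓ d b` take the same value on the two pairs. -/
def ConicSim {L : Type*} [SemilatticeInf L] (u d : L → L) (p q : L × L) : Prop :=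
  u p.1 ⊓ p.2 = u q.1 ⊓ q.2 ∧ p.1 ⊓ d p.2 = q.1 ⊓ d q.2

section Parallel

variable {L : Type*} [SemilatticeInf L] {u d : L → L}

theorem IsParallel.symm (hpar : IsParallel u d) : IsParallel d u := fun x y ↦ by
  simpa only [inf_comm, and_comm] using hpar y x

theorem ConicSim.swap {p q : L × L} (hpq : ConicSim u d p q) : ConicSim d u p.swap q.swap := by
  simpa only [ConicSim, Prod.fst_swap, Prod.snd_swap, inf_comm, and_comm] using hpq

theorem IsParallel.conicSim_inf_right (hpar : IsParallel u d) (hd : Monotone d) (x y : L) :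
    ConicSim u d (x, y) (x, u x ⊓ y) :=
  ⟨(inf_left_idem _ _).symm,
    le_antisymm (le_inf inf_le_left (hpar x y).2) (inf_le_inf_left x (hd inf_le_right))⟩

end Parallel

section Hom

variable {F L M : Type*} [SemilatticeInf L] [SemilatticeInf M] [FunLike F L M]
  {u d : L → L} {u' d' : M → M} {h : F}

theorem map_inf_apply_map_le [InfHomClass F L M] (hd : ∀ x, d' (h x) ≤ h (d x)) {a b c : L}
    (hle : a ⊓ d b ≤ c) : h a ⊓ d' (h b) ≤ h c :=
  calc h a ⊓ d' (h b) ≤ h a ⊓ h (d b) := inf_le_inf_left _ (hd b)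
    _ = h (a ⊓ d b) := (map_inf h a (d b)).symm
    _ ≤ h c := OrderHomClass.mono h hle

theorem IsParallel.apply_map_inf_map_le [InfHomClass F L M] (hpar' : IsParallel u' d')
    (hu' : Monotone u') (hu : ∀ x, u' (h x) ≤ h (u x)) (hd : ∀ x, d' (h x) ≤ h (d x))
    {a b c e : L} (hue : u a ⊓ b ≤ e) (hdc : a ⊓ d b ≤ c) :
    u' (h a) ⊓ h b ≤ u' (h c) ⊓ h e := by
  have fst_le : h a ⊓ d' (h b) ≤ h c := map_inf_apply_map_le hd hdc
  have snd_le : u' (h a) ⊓ h b ≤ h e := by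
    rw [inf_comm] at hue ⊢
    exact map_inf_apply_map_le hu hue
  exact le_inf ((hpar' _ _).1.trans (hu' fst_le)) snd_le

theorem IsParallel.apply_map_inf_map_eq [InfHomClass F L M] (hpar' : IsParallel u' d')
    (hu' : Monotone u') (hu : ∀ x, u' (h x) ≤ h (u x)) (hd : ∀ x, d' (h x) ≤ h (d x))
    {p q : L × L} (hpq : ConicSim u d p q) :
    u' (h p.1) ⊓ h p.2 = u' (h q.1) ⊓ h q.2 :=
  le_antisymm
    (hpar'.apply_map_inf_map_le hu' hu hd (hpq.1.trans_le inf_le_right)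
      (hpq.2.trans_le inf_le_left))
    (hpar'.apply_map_inf_map_le hu' hu hd (hpq.1.symm.trans_le inf_le_right)
      (hpq.2.symm.trans_le inf_le_left))

theorem ConicSim.map [InfHomClass F L M] (hpar' : IsParallel u' d') (hu' : Monotone u')
    (hd' : Monotone d') (hu : ∀ x, u' (h x) ≤ h (u x)) (hd : ∀ x, d' (h x) ≤ h (d x))
    {p q : L × L} (hpq : ConicSim u d p q) : ConicSim u' d' (p.map h h) (q.map h h) := by
  refine ⟨hpar'.apply_map_inf_map_eq hu' hu hd hpq, ?_⟩
  simpa only [Prod.map_fst, Prod.map_snd, Prod.fst_swap, Prod.snd_swap, inf_comm] using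
    hpar'.symm.apply_map_inf_map_eq hd' hd hu hpq.swap

theorem IsParallel.apply_map_le_of_preserves_sim [OrderTop L] [OrderTop M] [InfTopHomClass F L M]
    (hpar : IsParallel u d) (hd : Monotone d)
    (hsim : ∀ p q, ConicSim u d p q → ConicSim u' d' (p.map h h) (q.map h h)) (x : L) :
    u' (h x) ≤ h (u x) := by
  have sim_top : ConicSim u d (x, ⊤) (x, u x) := by
    simpa only [inf_top_eq] using hpar.conicSim_inf_right hd x ⊤
  have map_eq : u' (h x) = u' (h x) ⊓ h (u x) := by
    simpa only [Prod.map_apply, map_top, inf_top_eq] using (hsim _ _ sim_top).1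
  exact left_eq_inf.mp map_eq

variable (h) in
theorem conic_morphism_iff_preserves_sim_general [OrderTop L] [OrderTop M] [InfTopHomClass F L M]
    (hu : Monotone u) (hd : Monotone d) (hpar : IsParallel u d)
    (hu' : Monotone u') (hd' : Monotone d') (hpar' : IsParallel u' d') :
    ((∀ x, u' (h x) ≤ h (u x)) ∧ ∀ x, d' (h x) ≤ h (d x)) ↔
      ∀ p q, ConicSim u d p q → ConicSim u' d' (p.map h h) (q.map h h) := by
  constructor
  · rintro ⟨hlax_u, hlax_d⟩ p q hpq
    exact hpq.map hpar' hu' hd' hlax_u hlax_d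
  · intro hsim
    have hsim_swap : ∀ p q, ConicSim d u p q → ConicSim d' u' (p.map h h) (q.map h h) :=
      fun p q hpq ↦ (hsim p.swap q.swap hpq.swap).swap
    exact ⟨hpar.apply_map_le_of_preserves_sim hd hsim,
      hpar.symm.apply_map_le_of_preserves_sim hu hsim_swap⟩

end Hom

/-- A frame homomorphism between conic frames is a conic morphism iff it
preserves the generating relation `∼`. -/
theorem conic_morphism_iff_preserves_sim {L M : Type*} [Order.Frame L] [Order.Frame M]
    (u d : L → L) (u' d' : M → M)
    (hu : PreservesJoins u) (hd : PreservesJoins d) (hpar : IsParallel u d)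
    (hu' : PreservesJoins u') (hd' : PreservesJoins d') (hpar' : IsParallel u' d')
    (h : FrameHom L M) :
    ((∀ x : L, u' (h x) ≤ h (u x)) ∧ (∀ x : L, d' (h x) ≤ h (d x))) ↔
    (∀ a b c e : L, u a ⊓ b = u c ⊓ e → a ⊓ d b = c ⊓ d e →
      (u' (h a) ⊓ h b = u' (h c) ⊓ h e ∧ h a ⊓ d' (h b) = h c ⊓ d' (h e))) := by
  simpa only [ConicSim, Prod.forall, Prod.map_apply, and_imp] using
    conic_morphism_iff_preserves_sim_general h hu.monotone hd.monotone hpar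
      hu'.monotone hd'.monotone hpar'
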